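/- Let R be an integral domain, X a set with at least two elements, and L the free Lie algebra over R on X. Then for all x, z ∈ L the following are equivalent: (i) x = r • z for some r ∈ R; (ii) ⁅x, z⁆ = 0 and for every e ∈ L there exists e' ∈ L with ⁅e, e'⁆ = 0 and ⁅x, e⁆ = ⁅z, e'⁆. -/

import Mathlib

/-!
# Centralizers of generators in free Lie algebras

We show that the canonical map from a free Lie algebra to the free associative algebra is injective
over any commutative ring, by eliminating one generator at a time. It follows that the centralizer
of a generator consists of its scalar multiples, which gives the main theorem.
-/

namespace FreeAlgebra

attribute [local instance] LieRing.ofAssociativeRing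

variable {R X : Type*} [CommRing R]

/-- The derivation of a free algebra with prescribed values on the generators. -/
noncomputable def liftDerivation (f : X → FreeAlgebra R X) :
    FreeAlgebra R X →ₗ[R] FreeAlgebra R X :=
  ((TrivSqZeroExt.sndHom (FreeAlgebra R X) (FreeAlgebra R X)).restrictScalars R) ∘ₗ
    (lift R fun x ↦ (TrivSqZeroExt.inl (ι R x) + TrivSqZeroExt.inr (f x) :
      TrivSqZeroExt (FreeAlgebra R X) (FreeAlgebra R X))).toLinearMap

theorem liftDerivation_ι (f : X → FreeAlgebra R X) (x : X) :
    liftDerivation f (ι R x) = f x := by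
  simp [liftDerivation]

theorem liftDerivation_mul (f : X → FreeAlgebra R X) (p q : FreeAlgebra R X) :
    liftDerivation f (p * q) = liftDerivation f p * q + p * liftDerivation f q := by
  have fst_lift : (TrivSqZeroExt.fstHom R (FreeAlgebra R X) (FreeAlgebra R X)).comp
      (lift R fun x ↦ (TrivSqZeroExt.inl (ι R x) + TrivSqZeroExt.inr (f x))) =
      AlgHom.id R (FreeAlgebra R X) := by
    ext x; simp
  have fst_lift_apply (p : FreeAlgebra R X) := DFunLike.congr_fun fst_lift p
  simp only [AlgHom.comp_apply, TrivSqZeroExt.fstHom_apply, AlgHom.id_apply] at fst_lift_apply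
  simp only [liftDerivation, LinearMap.comp_apply, LinearMap.restrictScalars_apply,
    AlgHom.toLinearMap_apply, map_mul, TrivSqZeroExt.sndHom_apply, TrivSqZeroExt.snd_mul,
    fst_lift_apply, smul_eq_mul, MulOpposite.smul_eq_mul_unop, MulOpposite.unop_op]
  exact add_comm _ _

theorem lie_liftDerivation_mulLeft (f : X → FreeAlgebra R X) (p : FreeAlgebra R X) :
    ⁅liftDerivation f, LinearMap.mulLeft R p⁆ = LinearMap.mulLeft R (liftDerivation f p) := by
  ext q
  simp [Ring.lie_def, liftDerivation_mul]

/-- The map from the free algebra on the symbols `(n, b)`, with `b ≠ a`, which sends `(n, b)` to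
the iterated commutator `⁅a, ⁅a, …, ⁅a, b⁆⁆⁆`. -/
noncomputable def elimination (R : Type*) [CommRing R] (a : X) :
    FreeAlgebra R (ℕ × {b : X // b ≠ a}) →ₐ[R] FreeAlgebra R X :=
  lift R fun y ↦ (fun p ↦ ⁅ι R a, p⁆)^[y.1] (ι R y.2.1)

theorem elimination_injective (a : X) : Function.Injective (elimination R a) := by
  classical
  let D : Module.End R (FreeAlgebra R (ℕ × {b : X // b ≠ a})) :=
    liftDerivation fun y ↦ ι R (y.1 + 1, y.2)
  let ρ : FreeAlgebra R X →ₐ[R] Module.End R (FreeAlgebra R (ℕ × {b : X // b ≠ a})) :=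
    lift R fun c ↦ if h : c = a then D else LinearMap.mulLeft R (ι R (0, ⟨c, h⟩))
  have hρ (b : {b : X // b ≠ a}) (n : ℕ) :
      ρ ((fun p ↦ ⁅ι R a, p⁆)^[n] (ι R b.1)) = LinearMap.mulLeft R (ι R (n, b)) := by
    induction n with
    | zero => simp [ρ, b.2]
    | succ n ih =>
      have ha : ρ (ι R a) = D := by simp [ρ]
      rw [Function.iterate_succ_apply', Ring.lie_def, map_sub, map_mul, map_mul, ih, ha,
        ← Ring.lie_def, lie_liftDerivation_mulLeft, liftDerivation_ι]
  have hcomp : ρ.comp (elimination R a) = Algebra.lmul R _ := by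
    ext y : 2
    simp only [Function.comp_apply, AlgHom.comp_apply, elimination, lift_ι_apply, hρ]
    rfl
  intro p q hpq
  have h := congrArg (fun r ↦ ρ r 1) hpq
  have key (p) : ρ (elimination R a p) 1 = p := by
    rw [← AlgHom.comp_apply, hcomp]; simp
  simpa [key] using h

theorem coeff_of_commute_ι {a : X} {p : FreeAlgebra R X} (h : ι R a * p = p * ι R a)
    (w : FreeMonoid X) (hw : (equivMonoidAlgebraFreeMonoid p).coeff w ≠ 0) :
    ∀ c ∈ w.toList, c = a := by
  set q := equivMonoidAlgebraFreeMonoid p with hq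
  have hι : equivMonoidAlgebraFreeMonoid (ι R a) = MonoidAlgebra.single (FreeMonoid.of a) 1 := by
    simp [equivMonoidAlgebraFreeMonoid]
  have hcomm : MonoidAlgebra.single (FreeMonoid.of a) 1 * q =
      q * MonoidAlgebra.single (FreeMonoid.of a) 1 := by
    rw [← hι, hq, ← map_mul, h, map_mul]
  have hleft (u : FreeMonoid X) :
      (MonoidAlgebra.single (FreeMonoid.of a) 1 * q).coeff (FreeMonoid.of a * u) = q.coeff u := by
    rw [MonoidAlgebra.coeff_single_mul_eq_mul_coeff u (by simp), one_mul]
  suffices ∀ (l : List X) (n : ℕ),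
      q.coeff (FreeMonoid.ofList (List.replicate n a ++ l)) ≠ 0 → ∀ c ∈ l, c = a from
    this w.toList 0 (by simpa using hw)
  intro l
  induction l using List.reverseRecOn with
  | nil => simp
  | append_singleton l c ih =>
    intro n hn
    rw [← hleft, hcomm] at hn
    have hca : c = a := by
      by_contra hca
      refine hn (MonoidAlgebra.coeff_mul_single_of_forall_mul_ne _ _ fun d hd ↦ hca ?_)
      have hd' : d.toList ++ [a] = a :: (List.replicate n a ++ (l ++ [c])) :=
        congrArg FreeMonoid.toList hd
      rw [← List.append_assoc, ← List.cons_append] at hd'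
      exact (List.singleton_inj.1 (List.append_inj_right' hd' rfl)).symm
    subst hca
    have hw : FreeMonoid.of c * FreeMonoid.ofList (List.replicate n c ++ (l ++ [c])) =
        FreeMonoid.ofList (List.replicate (n + 1) c ++ l) * FreeMonoid.of c := by
      apply FreeMonoid.toList.injective
      simp [List.replicate_succ]
    rw [hw, MonoidAlgebra.coeff_mul_single_eq_coeff_mul
      (FreeMonoid.ofList (List.replicate (n + 1) c ++ l)) (by simp), mul_one] at hn
    intro d hd
    rcases List.mem_append.1 hd with hd | hd
    · exact ih (n + 1) hn d hd
    · simpa using hd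

open Classical in
/-- An element commuting with a generator `a` is a polynomial in `a`: it is not changed by setting
all other generators to zero. -/
theorem lift_single_of_commute_ι {a : X} {p : FreeAlgebra R X} (h : ι R a * p = p * ι R a) :
    lift R (fun c ↦ if c = a then ι R a else 0) p = p := by
  have hp : p = equivMonoidAlgebraFreeMonoid.symm (equivMonoidAlgebraFreeMonoid p) := by simp
  have hsum : p = (equivMonoidAlgebraFreeMonoid p).coeff.sum
      fun w r ↦ r • FreeMonoid.lift (ι R) w := by
    conv_lhs => rw [hp]
    simp [equivMonoidAlgebraFreeMonoid, MonoidAlgebra.lift_apply]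
  conv_lhs => rw [hsum]
  conv_rhs => rw [hsum]
  rw [map_finsuppSum]
  refine Finsupp.sum_congr fun w hw ↦ ?_
  have hw := coeff_of_commute_ι h w (Finsupp.mem_support_iff.1 hw)
  rw [map_smul]
  congr 1
  simp only [FreeMonoid.lift_apply, map_list_prod, List.map_map]
  congr 1
  exact List.map_congr_left fun c hc ↦ by simp [hw c hc]

end FreeAlgebra

namespace FreeLieAlgebra

attribute [local instance] LieRing.ofAssociativeRing

variable {R X : Type*} [CommRing R]

/-- A Lie subalgebra containing all generators is the whole free Lie algebra. -/
theorem mem_of_forall_of_mem (K : LieSubalgebra R (FreeLieAlgebra R X)) (h : ∀ x, of R x ∈ K)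
    (u : FreeLieAlgebra R X) : u ∈ K := by
  have hid : K.incl.comp (lift R fun x ↦ (⟨of R x, h x⟩ : K)) = LieHom.id := by
    ext x; simp
  have hu := DFunLike.congr_fun hid u
  rw [LieHom.comp_apply, LieHom.id_apply] at hu
  exact hu ▸ (lift R (fun x ↦ (⟨of R x, h x⟩ : K)) u).2

/-- The canonical map from the free Lie algebra to the free associative algebra. -/
noncomputable def toFreeAlgebra (R X : Type*) [CommRing R] :
    FreeLieAlgebra R X →ₗ⁅R⁆ FreeAlgebra R X :=
  lift R (FreeAlgebra.ι R)

@[simp]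
theorem toFreeAlgebra_of (x : X) : toFreeAlgebra R X (of R x) = FreeAlgebra.ι R x :=
  lift_of_apply _ _

/-- Iterated brackets of generators, with their multidegrees. -/
inductive IsMonomial : (X →₀ ℕ) → FreeLieAlgebra R X → Prop
  | of (x : X) : IsMonomial (Finsupp.single x 1) (of R x)
  | lie {m n : X →₀ ℕ} {u v : FreeLieAlgebra R X} :
      IsMonomial m u → IsMonomial n v → IsMonomial (m + n) ⁅u, v⁆

theorem IsMonomial.ne_zero {m : X →₀ ℕ} {u : FreeLieAlgebra R X} (h : IsMonomial m u) :
    m ≠ 0 := by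
  induction h with
  | of x => simp
  | lie _ _ ih _ => simp [ih]

theorem IsMonomial.eq_of {a : X} {m : X →₀ ℕ} {u : FreeLieAlgebra R X} (h : IsMonomial m u)
    (hm : m = Finsupp.single a 1) : u = FreeLieAlgebra.of R a := by
  cases h with
  | of x => rw [Finsupp.single_left_injective one_ne_zero hm]
  | @lie m n u v hu hv =>
    have h := congrArg Finsupp.degree hm
    have hm := (Finsupp.degree_eq_zero_iff m).not.2 hu.ne_zero
    have hn := (Finsupp.degree_eq_zero_iff n).not.2 hv.ne_zero
    rw [map_add, Finsupp.degree_single] at h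
    omega

/-- The span of the monomials whose multidegree satisfies `P`. -/
noncomputable def monomialSpan (R : Type*) [CommRing R] (P : (X →₀ ℕ) → Prop) :
    Submodule R (FreeLieAlgebra R X) :=
  Submodule.span R {u | ∃ m, P m ∧ IsMonomial m u}

theorem IsMonomial.mem_monomialSpan {P : (X →₀ ℕ) → Prop} {m : X →₀ ℕ}
    {u : FreeLieAlgebra R X} (h : IsMonomial m u) (hm : P m) : u ∈ monomialSpan R P :=
  Submodule.subset_span ⟨m, hm, h⟩

theorem monomialSpan_le {P : (X →₀ ℕ) → Prop} {S : Submodule R (FreeLieAlgebra R X)}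
    (h : ∀ m u, P m → IsMonomial m u → u ∈ S) : monomialSpan R P ≤ S :=
  Submodule.span_le.2 fun u ⟨m, hm, hu⟩ ↦ h m u hm hu

theorem monomialSpan_le_iSup (P : (X →₀ ℕ) → Prop) :
    monomialSpan R P ≤ ⨆ m : {m // P m}, monomialSpan R (· = m.1) :=
  monomialSpan_le fun m _ hm hu ↦
    le_iSup (fun m : {m // P m} ↦ monomialSpan R (· = m.1)) ⟨m, hm⟩ (hu.mem_monomialSpan rfl)

theorem lie_mem_monomialSpan {P Q T : (X →₀ ℕ) → Prop} (h : ∀ m n, P m → Q n → T (m + n))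
    {u v : FreeLieAlgebra R X} (hu : u ∈ monomialSpan R P) (hv : v ∈ monomialSpan R Q) :
    ⁅u, v⁆ ∈ monomialSpan R T := by
  induction hu, hv using Submodule.span_induction₂ with
  | mem_mem u v hu hv =>
    obtain ⟨m, hm, hu⟩ := hu
    obtain ⟨n, hn, hv⟩ := hv
    exact (hu.lie hv).mem_monomialSpan (h m n hm hn)
  | zero_left v hv => simp
  | zero_right u hu => simp
  | add_left u u' v _ _ _ h₁ h₂ => rw [add_lie]; exact add_mem h₁ h₂
  | add_right u v v' _ _ _ h₁ h₂ => rw [lie_add]; exact add_mem h₁ h₂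
  | smul_left r u v _ _ h => rw [smul_lie]; exact Submodule.smul_mem _ r h
  | smul_right r u v _ _ h => rw [lie_smul]; exact Submodule.smul_mem _ r h

theorem mem_monomialSpan_true (u : FreeLieAlgebra R X) :
    u ∈ monomialSpan R (fun _ : X →₀ ℕ ↦ True) :=
  mem_of_forall_of_mem
    { monomialSpan R (fun _ : X →₀ ℕ ↦ True) with
      lie_mem' := lie_mem_monomialSpan fun _ _ _ _ ↦ trivial }
    (fun x ↦ (IsMonomial.of x).mem_monomialSpan trivial) u

/-- The algebra homomorphism recording the multidegree of each monomial. -/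
noncomputable def degreeHom (R X : Type*) [CommRing R] :
    FreeAlgebra R X →ₐ[R] AddMonoidAlgebra (FreeAlgebra R X) (X →₀ ℕ) :=
  FreeAlgebra.lift R fun x ↦ AddMonoidAlgebra.single (Finsupp.single x 1) (FreeAlgebra.ι R x)

theorem degreeHom_toFreeAlgebra {m : X →₀ ℕ} {u : FreeLieAlgebra R X}
    (hu : u ∈ monomialSpan R (· = m)) :
    degreeHom R X (toFreeAlgebra R X u) = AddMonoidAlgebra.single m (toFreeAlgebra R X u) := by
  induction hu using Submodule.span_induction with
  | mem u hu =>
    obtain ⟨_, rfl, hu⟩ := hu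
    induction hu with
    | of x => simp [degreeHom]
    | @lie m n u v _ _ hu hv =>
      simp only [LieHom.map_lie, Ring.lie_def, map_sub, map_mul, hu, hv,
        AddMonoidAlgebra.single_mul_single, AddMonoidAlgebra.single_sub, add_comm n m]
  | zero => simp
  | add u v _ _ hu hv => simp [hu, hv]
  | smul r u _ hu => simp [hu]

/-- The kernel of `toFreeAlgebra` is compatible with the multigrading. -/
theorem eq_zero_of_mem_monomialSpan {P : (X →₀ ℕ) → Prop}
    (h : ∀ m, P m → ∀ u ∈ monomialSpan R (· = m), toFreeAlgebra R X u = 0 → u = 0)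
    {u : FreeLieAlgebra R X} (hu : u ∈ monomialSpan R P) (hu0 : toFreeAlgebra R X u = 0) :
    u = 0 := by
  classical
  obtain ⟨f, hf, rfl⟩ := (Submodule.mem_iSup_iff_exists_finsupp _ _).1 (monomialSpan_le_iSup P hu)
  refine Finset.sum_eq_zero fun m _ ↦ h m.1 m.2 _ (hf m) ?_
  have h0 := congrArg (fun p ↦ (degreeHom R X p).coeff m.1) hu0
  simp only [Finsupp.sum, map_sum, degreeHom_toFreeAlgebra (hf _), map_zero] at h0
  by_cases hm : m ∈ f.support
  · simpa [Finsupp.single_apply, ← Subtype.ext_iff, hm] using h0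
  · simp [Finsupp.notMem_support_iff.1 hm]

/-- The map from the free Lie algebra on the symbols `(n, b)`, with `b ≠ a`, which sends `(n, b)` to
the iterated bracket `⁅a, ⁅a, …, ⁅a, b⁆⁆⁆`. -/
noncomputable def elimination (R : Type*) [CommRing R] (a : X) :
    FreeLieAlgebra R (ℕ × {b : X // b ≠ a}) →ₗ⁅R⁆ FreeLieAlgebra R X :=
  lift R fun y ↦ (fun u ↦ ⁅of R a, u⁆)^[y.1] (of R y.2.1)

theorem toFreeAlgebra_elimination (a : X) (u : FreeLieAlgebra R (ℕ × {b : X // b ≠ a})) :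
    toFreeAlgebra R X (elimination R a u) =
      FreeAlgebra.elimination R a (toFreeAlgebra R _ u) := by
  have h : (toFreeAlgebra R X).comp (elimination R a) =
      (FreeAlgebra.elimination R a : _ →ₗ⁅R⁆ FreeAlgebra R X).comp (toFreeAlgebra R _) := by
    ext ⟨n, b⟩
    simp only [LieHom.comp_apply, elimination, lift_of_apply, toFreeAlgebra_of]
    simp only [AlgHom.coe_toLieHom, FreeAlgebra.elimination, FreeAlgebra.lift_ι_apply]
    induction n with
    | zero => simp
    | succ n ih => simp only [Function.iterate_succ_apply', LieHom.map_lie, ih, toFreeAlgebra_of]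
  exact DFunLike.congr_fun h u

/-- The image under `elimination` of the elements of length `k`. -/
noncomputable def eliminationRange (R : Type*) [CommRing R] (a : X) (k : ℕ) :
    Submodule R (FreeLieAlgebra R X) :=
  (monomialSpan R fun m ↦ m.degree = k).map
    (elimination R a : FreeLieAlgebra R (ℕ × {b : X // b ≠ a}) →ₗ[R] FreeLieAlgebra R X)

theorem lie_mem_eliminationRange {a : X} {k l : ℕ} {u v : FreeLieAlgebra R X}
    (hu : u ∈ eliminationRange R a k) (hv : v ∈ eliminationRange R a l) :
    ⁅u, v⁆ ∈ eliminationRange R a (k + l) := by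
  obtain ⟨u, hu, rfl⟩ := hu
  obtain ⟨v, hv, rfl⟩ := hv
  refine ⟨⁅u, v⁆, lie_mem_monomialSpan (fun m n hm hn ↦ ?_) hu hv, LieHom.map_lie _ _ _⟩
  rw [map_add, hm, hn]

theorem lie_of_mem_eliminationRange {a : X} {k : ℕ} {u : FreeLieAlgebra R X}
    (hu : u ∈ eliminationRange R a k) : ⁅of R a, u⁆ ∈ eliminationRange R a k := by
  have hmem {m : (ℕ × {b : X // b ≠ a}) →₀ ℕ} {v} (hv : IsMonomial m v) :
      elimination R a v ∈ eliminationRange R a m.degree :=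
    Submodule.mem_map_of_mem (hv.mem_monomialSpan rfl)
  obtain ⟨u, hu, rfl⟩ := hu
  induction hu using Submodule.span_induction with
  | mem u hu =>
    obtain ⟨m, rfl, hu⟩ := hu
    induction hu with
    | of y =>
      have h := hmem (IsMonomial.of (R := R) (y.1 + 1, y.2))
      simpa [elimination, Function.iterate_succ_apply'] using h
    | @lie m n u v hu hv ihu ihv =>
      have h₁ := lie_mem_eliminationRange ihu (hmem hv)
      have h₂ := lie_mem_eliminationRange (hmem hu) ihv
      rw [map_add, LieHom.coe_toLinearMap, LieHom.map_lie, leibniz_lie]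
      exact add_mem h₁ h₂
  | zero => simp
  | add u v _ _ hu hv => rw [map_add, lie_add]; exact add_mem hu hv
  | smul r u _ hu => rw [map_smul, lie_smul]; exact Submodule.smul_mem _ r hu

theorem IsMonomial.mem_eliminationRange {a : X} {m : X →₀ ℕ} {u : FreeLieAlgebra R X}
    (h : IsMonomial m u) :
    (m = Finsupp.single a 1 ∧ u = FreeLieAlgebra.of R a) ∨
      u ∈ eliminationRange R a (m.degree - m a) := by
  classical
  induction h with
  | of b =>
    by_cases hb : b = a
    · subst hb
      exact Or.inl ⟨rfl, rfl⟩
    · refine Or.inr ⟨FreeLieAlgebra.of R (0, ⟨b, hb⟩), IsMonomial.mem_monomialSpan (.of _) ?_, ?_⟩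
      · simp [hb]
      · simp [elimination]
  | @lie m n u v _ _ hu hv =>
    right
    have hm := m.le_degree a
    have hn := n.le_degree a
    rw [map_add, Finsupp.add_apply]
    rcases hu with ⟨rfl, rfl⟩ | hu <;> rcases hv with ⟨rfl, rfl⟩ | hv
    · simp
    · simpa [Nat.add_sub_add_left] using lie_of_mem_eliminationRange hv
    · rw [← lie_skew]
      refine neg_mem ?_
      simpa using lie_of_mem_eliminationRange hu
    · convert lie_mem_eliminationRange hu hv using 2
      omega

theorem eq_zero_of_toFreeAlgebra_eq_zero (n : ℕ) {X : Type*} (m : X →₀ ℕ) (hmn : m.degree = n)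
    {u : FreeLieAlgebra R X} (hu : u ∈ monomialSpan R (· = m)) (hu0 : toFreeAlgebra R X u = 0) :
    u = 0 := by
  induction n using Nat.strong_induction_on generalizing X with
  | _ n ih =>
  by_cases hm : m = 0
  · have : monomialSpan R (· = m) ≤ (⊥ : Submodule R (FreeLieAlgebra R X)) :=
      monomialSpan_le fun _ _ h hv ↦ (hv.ne_zero (h.trans hm)).elim
    exact this hu
  obtain ⟨a, ha⟩ : ∃ a, m a ≠ 0 := by simpa [Finsupp.ext_iff] using hm
  have hle := m.le_degree a
  have hinj : ∀ v ∈ eliminationRange R a (m.degree - m a), toFreeAlgebra R X v = 0 → v = 0 := by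
    rintro _ ⟨v, hv, rfl⟩ hv0
    have hv0' : toFreeAlgebra R _ v = 0 := by
      apply FreeAlgebra.elimination_injective (R := R) a
      rw [← toFreeAlgebra_elimination, map_zero]
      exact hv0
    have : v = 0 := eq_zero_of_mem_monomialSpan
      (fun k hk w hw hw0 ↦ ih _ (by omega) k hk hw hw0) hv hv0'
    simp [this]
  by_cases hma : m = Finsupp.single a 1
  · have hspan : monomialSpan R (· = m) ≤ Submodule.span R {of R a} :=
      monomialSpan_le fun _ v h hv ↦ hv.eq_of (h.trans hma) ▸ Submodule.mem_span_singleton_self _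
    obtain ⟨r, rfl⟩ := Submodule.mem_span_singleton.1 (hspan hu)
    have hr := congrArg (FreeAlgebra.lift R fun _ ↦ (1 : R)) hu0
    have hr : r = 0 := by simpa using hr
    simp [hr]
  · refine hinj u (monomialSpan_le ?_ hu) hu0
    rintro _ v rfl hv
    exact hv.mem_eliminationRange.resolve_left fun h ↦ hma h.1

/-- The canonical map from a free Lie algebra to the free associative algebra is injective. -/
theorem toFreeAlgebra_injective : Function.Injective (toFreeAlgebra R X) :=
  (injective_iff_map_eq_zero _).2 fun u hu ↦ eq_zero_of_mem_monomialSpan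
    (fun m _ _ hv hv0 ↦ eq_zero_of_toFreeAlgebra_eq_zero _ m rfl hv hv0)
    (mem_monomialSpan_true u) hu

/-- The centralizer of a generator consists of its scalar multiples. -/
theorem exists_eq_smul_of_lie_eq_zero {a : X} {u : FreeLieAlgebra R X} (h : ⁅of R a, u⁆ = 0) :
    ∃ r : R, u = r • of R a := by
  classical
  let f : FreeLieAlgebra R X →ₗ⁅R⁆ FreeLieAlgebra R X :=
    lift R fun c ↦ if c = a then of R a else 0
  let K : LieSubalgebra R (FreeLieAlgebra R X) :=
    { (Submodule.span R {of R a}).comap (f : FreeLieAlgebra R X →ₗ[R] FreeLieAlgebra R X) with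
      lie_mem' := by
        intro v w hv hw
        obtain ⟨r, hr⟩ := Submodule.mem_span_singleton.1 hv
        obtain ⟨s, hs⟩ := Submodule.mem_span_singleton.1 hw
        have hvw : f ⁅v, w⁆ = 0 := by
          rw [LieHom.map_lie, ← LieHom.coe_toLinearMap, ← hr, ← hs]
          simp
        exact (congrArg (· ∈ Submodule.span R {of R a}) hvw).mpr (zero_mem _) }
  have hK : u ∈ K := by
    refine mem_of_forall_of_mem K (fun c ↦ ?_) u
    change f (of R c) ∈ Submodule.span R {of R a}
    by_cases hc : c = a
    · simp [f, hc, Submodule.mem_span_singleton_self]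
    · simp [f, hc]
  obtain ⟨r, hr⟩ := Submodule.mem_span_singleton.1 hK
  refine ⟨r, ?_⟩
  have hcomm : FreeAlgebra.ι R a * toFreeAlgebra R X u =
      toFreeAlgebra R X u * FreeAlgebra.ι R a := by
    rw [← sub_eq_zero, ← Ring.lie_def, ← toFreeAlgebra_of, ← LieHom.map_lie, h, map_zero]
  have hcomp : (toFreeAlgebra R X).comp f =
      (FreeAlgebra.lift R (fun c ↦ if c = a then FreeAlgebra.ι R a else 0) :
        _ →ₗ⁅R⁆ FreeAlgebra R X).comp (toFreeAlgebra R X) := by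
    ext c
    by_cases hc : c = a <;> simp [f, hc]
  apply toFreeAlgebra_injective
  rw [hr, ← FreeAlgebra.lift_single_of_commute_ι hcomm]
  exact (DFunLike.congr_fun hcomp u).symm

theorem eq_zero_of_smul_of_eq_smul_of {a b : X} (hab : a ≠ b) {r s : R}
    (h : r • of R a = s • of R b) :
    r = 0 := by
  classical
  have h' := congrArg (fun u ↦ FreeAlgebra.lift R (fun c ↦ if c = a then (1 : R) else 0)
    (toFreeAlgebra R X u)) h
  simpa [hab.symm] using h'

theorem eq_zero_of_smul_eq_zero [IsDomain R] {r : R} (hr : r ≠ 0) {u : FreeLieAlgebra R X}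
    (h : r • u = 0) : u = 0 := by
  apply toFreeAlgebra_injective
  have h' := congrArg (toFreeAlgebra R X) h
  rw [map_smul, map_zero, Algebra.smul_def] at h'
  rw [map_zero]
  exact (mul_eq_zero.1 h').resolve_left ((FreeAlgebra.algebraMap_eq_zero_iff r).not.2 hr)

/-- If `x` and `z` commute and `⁅x, a⁆ = ⁅z, e⁆` for some `e` commuting with the generator `a`, then
either `x` is a multiple of `z`, or `z` is a multiple of `a` and `x` is a nonzero multiple of `a`
modulo `z`. -/
theorem exists_eq_smul_or_of_lie_eq [IsDomain R] {x z e : FreeLieAlgebra R X} {a : X}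
    (hxz : ⁅x, z⁆ = 0) (hae : ⁅of R a, e⁆ = 0) (h : ⁅x, of R a⁆ = ⁅z, e⁆) :
    (∃ r : R, x = r • z) ∨
      (∃ r : R, z = r • of R a) ∧ ∃ s t : R, t ≠ 0 ∧ x = s • z + t • of R a := by
  obtain ⟨s, rfl⟩ := exists_eq_smul_of_lie_eq_zero hae
  have hlie : ⁅of R a, x - s • z⁆ = 0 := by
    rw [← lie_skew, sub_lie, h, smul_lie, lie_smul, sub_self, neg_zero]
  obtain ⟨t, ht⟩ := exists_eq_smul_of_lie_eq_zero hlie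
  obtain rfl := sub_eq_iff_eq_add'.1 ht
  by_cases ht0 : t = 0
  · exact Or.inl ⟨s, by simp [ht0]⟩
  · refine Or.inr ⟨exists_eq_smul_of_lie_eq_zero (eq_zero_of_smul_eq_zero ht0 ?_), s, t, ht0, rfl⟩
    simpa using hxz

end FreeLieAlgebra

/-- In a non-commutative free Lie algebra `L` over an integral domain `R`, the
predicate `x ∈ Rz` is defined by the formula
`⁅x, z⁆ = 0 ∧ ∀ e ∃ e', ⁅e, e'⁆ = 0 ∧ ⁅x, e⁆ = ⁅z, e'⁆`. -/
theorem mem_scalar_multiples_iff {R : Type*} [CommRing R] [IsDomain R]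
    {X : Type*} (hX : ∃ x y : X, x ≠ y) (x z : FreeLieAlgebra R X) :
    (∃ r : R, x = r • z) ↔
      (⁅x, z⁆ = 0 ∧ ∀ e : FreeLieAlgebra R X, ∃ e' : FreeLieAlgebra R X,
        ⁅e, e'⁆ = 0 ∧ ⁅x, e⁆ = ⁅z, e'⁆) := by
  constructor
  · rintro ⟨r, rfl⟩
    exact ⟨by simp, fun e ↦ ⟨r • e, by simp, by simp⟩⟩
  · rintro ⟨hxz, h⟩
    obtain ⟨a, b, hab⟩ := hX
    obtain ⟨e, hae, he⟩ := h (FreeLieAlgebra.of R a)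
    obtain ⟨e', hbe, he'⟩ := h (FreeLieAlgebra.of R b)
    rcases FreeLieAlgebra.exists_eq_smul_or_of_lie_eq hxz hae he with
      hx | ⟨⟨r, hr⟩, s, t, ht, hx⟩
    · exact hx
    rcases FreeLieAlgebra.exists_eq_smul_or_of_lie_eq hxz hbe he' with
      hx' | ⟨⟨r', hr'⟩, s', t', -, hx'⟩
    · exact hx'
    have hr0 : r = 0 := FreeLieAlgebra.eq_zero_of_smul_of_eq_smul_of hab (hr.symm.trans hr')
    obtain rfl : z = 0 := by rw [hr, hr0, zero_smul]
    rw [smul_zero, zero_add] at hx hx'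
    exact (ht (FreeLieAlgebra.eq_zero_of_smul_of_eq_smul_of hab (hx.symm.trans hx'))).elim
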